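/- Let p be a positive pmf on {1,2}^4 (four binary variables X1, X2, X3, X4) satisfying (X2,X4) ⊥ X1. Write q_2 = P(X2=1), q_4 = P(X4=1), q_{24} = P(X2=1, X4=1), and for i ∈ {1,2}: q_{3|i} = P(X3=1 | X1=i), q_{23|i} = P(X2=1, X3=1 | X1=i), q_{34|i} = P(X3=1, X4=1 | X1=i), q_{234|i} = P(X2=1, X3=1, X4=1 | X1=i). Then X2 ⊥ X4 | (X1,X3) if and only if for i = 1, 2 both: q_{23|i} · q_{34|i} = q_{3|i} · q_{234|i}, and q_{3|i} · q_{24} − q_{23|i} · q_4 − q_{34|i} · q_2 + q_{234|i} = q_{24} − q_2 · q_4. (Equations (5.6) and (5.7): the binary specialization of Proposition 14.) -/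

import Mathlib

open Finset

section

/- Four binary variables with states `{1, 2}` encoded as `Fin 2 = {0, 1}`; the state `1`
of the paper is `0` and the state `2` is `1`. -/

/-- `P(X1 = i)`. -/
noncomputable def pX1 (p : Fin 2 × Fin 2 × Fin 2 × Fin 2 → ℝ) (i : Fin 2) : ℝ :=
  ∑ j, ∑ k, ∑ l, p (i, j, k, l)

/-- `q₂ = P(X2 = 1)`. -/
noncomputable def q2 (p : Fin 2 × Fin 2 × Fin 2 × Fin 2 → ℝ) : ℝ :=
  ∑ i, ∑ k, ∑ l, p (i, 0, k, l)

/-- `q₄ = P(X4 = 1)`. -/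
noncomputable def q4 (p : Fin 2 × Fin 2 × Fin 2 × Fin 2 → ℝ) : ℝ :=
  ∑ i, ∑ j, ∑ k, p (i, j, k, 0)

/-- `q₂₄ = P(X2 = 1, X4 = 1)`. -/
noncomputable def q24 (p : Fin 2 × Fin 2 × Fin 2 × Fin 2 → ℝ) : ℝ :=
  ∑ i, ∑ k, p (i, 0, k, 0)

/-- `q₃|ᵢ = P(X3 = 1 | X1 = i)`. -/
noncomputable def q3c (p : Fin 2 × Fin 2 × Fin 2 × Fin 2 → ℝ) (i : Fin 2) : ℝ :=
  (∑ j, ∑ l, p (i, j, 0, l)) / pX1 p i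

/-- `q₂₃|ᵢ = P(X2 = 1, X3 = 1 | X1 = i)`. -/
noncomputable def q23c (p : Fin 2 × Fin 2 × Fin 2 × Fin 2 → ℝ) (i : Fin 2) : ℝ :=
  (∑ l, p (i, 0, 0, l)) / pX1 p i

/-- `q₃₄|ᵢ = P(X3 = 1, X4 = 1 | X1 = i)`. -/
noncomputable def q34c (p : Fin 2 × Fin 2 × Fin 2 × Fin 2 → ℝ) (i : Fin 2) : ℝ :=
  (∑ j, p (i, j, 0, 0)) / pX1 p i

/-- `q₂₃₄|ᵢ = P(X2 = 1, X3 = 1, X4 = 1 | X1 = i)`. -/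
noncomputable def q234c (p : Fin 2 × Fin 2 × Fin 2 × Fin 2 → ℝ) (i : Fin 2) : ℝ :=
  p (i, 0, 0, 0) / pX1 p i

/-! Given `X1 = i`, let `A` and `B` be the tables `P(X2 = j, X3 = k, X4 = l | X1 = i)` with `k = 1`
and `k = 2`. By `(X2, X4) ⊥ X1` their sum `C` is the table of `(X2, X4)`, whatever `i` is. A `2 × 2`
table with total `t`, first row sum `r`, first column sum `c` and corner `x` has determinant
`t x - r c`, and its two variables are independent iff this vanishes. Hence (5.6) says `det A = 0`.
As `C` has total `1`, (5.7) says that the polar form of `det` at `(A, C)` equals `det C`, i.e. that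
`det B = det (C - A) = det A`. -/

section Tables

variable {R α β : Type*}

/-- The total mass of a two-way table. -/
def tableSum [AddCommMonoid R] [Fintype α] [Fintype β] (A : Matrix α β R) : R := ∑ j, ∑ l, A j l

/-- The marginal of the row variable of a two-way table. -/
def rowSum [AddCommMonoid R] [Fintype β] (A : Matrix α β R) (j : α) : R := ∑ l, A j l

/-- The marginal of the column variable of a two-way table. -/
def colSum [AddCommMonoid R] [Fintype α] (A : Matrix α β R) (l : β) : R := ∑ j, A j l

/-- Independence of the row and column variables of a two-way table. The table need not be
normalized, so that slices of a joint law at fixed values of the other variables are allowed. -/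
def IsIndepTable [CommSemiring R] [Fintype α] [Fintype β] (A : Matrix α β R) : Prop :=
  ∀ j l, A j l * tableSum A = rowSum A j * colSum A l

theorem tableSum_smul [Semiring R] [Fintype α] [Fintype β] (c : R) (A : Matrix α β R) :
    tableSum (c • A) = c * tableSum A := by
  simp only [tableSum, Matrix.smul_apply, smul_eq_mul, mul_sum]

theorem rowSum_smul [Semiring R] [Fintype β] (c : R) (A : Matrix α β R) (j : α) :
    rowSum (c • A) j = c * rowSum A j := by
  simp only [rowSum, Matrix.smul_apply, smul_eq_mul, mul_sum]

theorem colSum_smul [Semiring R] [Fintype α] (c : R) (A : Matrix α β R) (l : β) :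
    colSum (c • A) l = c * colSum A l := by
  simp only [colSum, Matrix.smul_apply, smul_eq_mul, mul_sum]

theorem isIndepTable_smul_iff [CommSemiring R] [IsCancelMulZero R] [Fintype α] [Fintype β]
    {c : R} (hc : c ≠ 0) {A : Matrix α β R} : IsIndepTable (c • A) ↔ IsIndepTable A := by
  simp only [IsIndepTable, tableSum_smul, rowSum_smul, colSum_smul, Matrix.smul_apply,
    smul_eq_mul, mul_mul_mul_comm c _ c, mul_right_inj' (mul_ne_zero hc hc)]

end Tables

section TwoByTwo

variable {R : Type*} [CommRing R]

theorem det_eq_tableSum_mul_sub (A : Matrix (Fin 2) (Fin 2) R) :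
    A.det = tableSum A * A 0 0 - rowSum A 0 * colSum A 0 := by
  simp only [Matrix.det_fin_two, tableSum, rowSum, colSum, Fin.sum_univ_two]
  ring

theorem det_sub_fin_two (C A : Matrix (Fin 2) (Fin 2) R) :
    (C - A).det = C.det + A.det - (tableSum A * C 0 0 - rowSum A 0 * colSum C 0
      - colSum A 0 * rowSum C 0 + tableSum C * A 0 0) := by
  simp only [Matrix.det_fin_two, Matrix.sub_apply, tableSum, rowSum, colSum, Fin.sum_univ_two]
  ring

theorem isIndepTable_iff_det_eq_zero {A : Matrix (Fin 2) (Fin 2) R} :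
    IsIndepTable A ↔ A.det = 0 := by
  simp only [IsIndepTable, Fin.forall_fin_two, Matrix.det_fin_two, tableSum, rowSum, colSum,
    Fin.sum_univ_two]
  constructor
  · rintro ⟨⟨h, -⟩, -⟩
    linear_combination h
  · intro h
    refine ⟨⟨?_, ?_⟩, ?_, ?_⟩
    · linear_combination h
    · linear_combination -h
    · linear_combination -h
    · linear_combination h

theorem isIndepTable_and_isIndepTable_sub_iff {A C : Matrix (Fin 2) (Fin 2) R}
    (hC : tableSum C = 1) :
    IsIndepTable A ∧ IsIndepTable (C - A) ↔
      rowSum A 0 * colSum A 0 = tableSum A * A 0 0 ∧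
      tableSum A * C 0 0 - rowSum A 0 * colSum C 0 - colSum A 0 * rowSum C 0 + A 0 0
        = C 0 0 - rowSum C 0 * colSum C 0 := by
  have hdetA := det_eq_tableSum_mul_sub A
  have hdetC := det_eq_tableSum_mul_sub C
  have hdetB := det_sub_fin_two C A
  rw [hC, one_mul] at hdetC hdetB
  rw [isIndepTable_iff_det_eq_zero, isIndepTable_iff_det_eq_zero]
  constructor
  · rintro ⟨hA, hB⟩
    exact ⟨by linear_combination hdetA - hA, by linear_combination hdetC + hA - hB + hdetB⟩
  · rintro ⟨h₁, h₂⟩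
    have hA : A.det = 0 := by linear_combination hdetA - h₁
    exact ⟨hA, by linear_combination hdetB + hdetC + hA - h₂⟩

end TwoByTwo

section JointLaw

variable {K ι α κ β : Type*} [Field K] [Fintype α] [Fintype κ] [Fintype β]

/-- The marginal of `X1` under a joint law `p` of `(X1, X2, X3, X4)`. -/
def fstMarginal (p : ι × α × κ × β → K) (i : ι) : K := ∑ j, ∑ k, ∑ l, p (i, j, k, l)

/-- The table of `P(X2 = j, X3 = k, X4 = l | X1 = i)` in the variables `j` and `l`, for fixed
`i` and `k`. -/
def condTable (p : ι × α × κ × β → K) (i : ι) (k : κ) : Matrix α β K :=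
  (fstMarginal p i)⁻¹ • Matrix.of fun j l => p (i, j, k, l)

/-- The table of the marginal law of `(X2, X4)`. -/
def jointTable [Fintype ι] (p : ι × α × κ × β → K) : Matrix α β K :=
  Matrix.of fun j l => ∑ i, ∑ k, p (i, j, k, l)

theorem sum_condTable_eq_jointTable [Fintype ι] {p : ι × α × κ × β → K} {i : ι}
    (hi : fstMarginal p i ≠ 0)
    (hind : ∀ j l, ∑ k, p (i, j, k, l) = (∑ i', ∑ k, p (i', j, k, l)) * fstMarginal p i) :
    ∑ k, condTable p i k = jointTable p := by
  ext j l
  simp only [condTable, jointTable, Matrix.sum_apply, Matrix.smul_apply, Matrix.of_apply,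
    smul_eq_mul, ← mul_sum]
  rw [hind, mul_comm, mul_inv_cancel_right₀ hi]

theorem tableSum_sum_condTable {p : ι × α × κ × β → K} {i : ι} (hi : fstMarginal p i ≠ 0) :
    tableSum (∑ k, condTable p i k) = 1 := by
  have hmass : tableSum (∑ k, Matrix.of fun j l => p (i, j, k, l)) = fstMarginal p i := by
    simp only [tableSum, fstMarginal, Matrix.sum_apply, Matrix.of_apply]
    exact sum_congr rfl fun j _ => sum_comm
  simp only [condTable, ← smul_sum, tableSum_smul, hmass, inv_mul_cancel₀ hi]

theorem isIndepTable_condTable_iff {p : ι × α × κ × β → K} {i : ι} (hi : fstMarginal p i ≠ 0)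
    {k : κ} :
    IsIndepTable (condTable p i k) ↔
      ∀ j l, p (i, j, k, l) * (∑ j', ∑ l', p (i, j', k, l'))
        = (∑ l', p (i, j, k, l')) * (∑ j', p (i, j', k, l)) :=
  isIndepTable_smul_iff (inv_ne_zero hi)

theorem binary_prop14_general [Fintype ι] (p : ι × Fin 2 × Fin 2 × Fin 2 → K)
    (hX1 : ∀ i, fstMarginal p i ≠ 0)
    (hind : ∀ i j l, ∑ k, p (i, j, k, l) = (∑ i', ∑ k, p (i', j, k, l)) * fstMarginal p i) :
    (∀ i j k l, p (i, j, k, l) * (∑ j', ∑ l', p (i, j', k, l'))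
        = (∑ l', p (i, j, k, l')) * (∑ j', p (i, j', k, l))) ↔
      ∀ i, rowSum (condTable p i 0) 0 * colSum (condTable p i 0) 0
          = tableSum (condTable p i 0) * condTable p i 0 0 0 ∧
        tableSum (condTable p i 0) * jointTable p 0 0
            - rowSum (condTable p i 0) 0 * colSum (jointTable p) 0
            - colSum (condTable p i 0) 0 * rowSum (jointTable p) 0 + condTable p i 0 0 0
          = jointTable p 0 0 - rowSum (jointTable p) 0 * colSum (jointTable p) 0 := by
  refine forall_congr' fun i => ?_
  have hsum := sum_condTable_eq_jointTable (hX1 i) (hind i)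
  have hone : tableSum (jointTable p) = 1 := hsum ▸ tableSum_sum_condTable (hX1 i)
  have hsub : jointTable p - condTable p i 0 = condTable p i 1 := by
    rw [← hsum, Fin.sum_univ_two, add_sub_cancel_left]
  rw [← isIndepTable_and_isIndepTable_sub_iff hone, hsub, forall_comm,
    ← Fin.forall_fin_two (p := fun k => IsIndepTable (condTable p i k))]
  exact forall_congr' fun k => (isIndepTable_condTable_iff (hX1 i)).symm

end JointLaw

section BinaryMarginals

theorem pX1_pos {p : Fin 2 × Fin 2 × Fin 2 × Fin 2 → ℝ} (hp : ∀ s, 0 < p s) (i : Fin 2) :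
    0 < pX1 p i :=
  sum_pos (fun _ _ => sum_pos (fun _ _ => sum_pos (fun _ _ => hp _) univ_nonempty)
    univ_nonempty) univ_nonempty

variable (p : Fin 2 × Fin 2 × Fin 2 × Fin 2 → ℝ)

theorem q2_eq_rowSum : q2 p = rowSum (jointTable p) 0 := by
  simp only [q2, rowSum, jointTable, Matrix.of_apply, Fin.sum_univ_two]
  ring

theorem q4_eq_colSum : q4 p = colSum (jointTable p) 0 := sum_comm

theorem q24_eq_jointTable : q24 p = jointTable p 0 0 := rfl

theorem q3c_eq_tableSum (i : Fin 2) : q3c p i = tableSum (condTable p i 0) := by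
  rw [condTable, tableSum_smul, ← div_eq_inv_mul]
  rfl

theorem q23c_eq_rowSum (i : Fin 2) : q23c p i = rowSum (condTable p i 0) 0 := by
  rw [condTable, rowSum_smul, ← div_eq_inv_mul]
  rfl

theorem q34c_eq_colSum (i : Fin 2) : q34c p i = colSum (condTable p i 0) 0 := by
  rw [condTable, colSum_smul, ← div_eq_inv_mul]
  rfl

theorem q234c_eq_condTable (i : Fin 2) : q234c p i = condTable p i 0 0 0 :=
  div_eq_inv_mul _ _

end BinaryMarginals

/-- equations (5.6) and (5.7); binary Proposition 14: for a positive pmf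
`p` on `{1,2}⁴` with `(X2, X4) ⊥ X1`, the conditional independence `X2 ⊥ X4 | (X1, X3)`
holds if and only if for `i = 1, 2` both
`q₂₃|ᵢ q₃₄|ᵢ = q₃|ᵢ q₂₃₄|ᵢ` and
`q₃|ᵢ q₂₄ − q₂₃|ᵢ q₄ − q₃₄|ᵢ q₂ + q₂₃₄|ᵢ = q₂₄ − q₂ q₄`. -/
theorem binary_prop14 (p : Fin 2 × Fin 2 × Fin 2 × Fin 2 → ℝ)
    (hp0 : ∀ s, 0 < p s) (hp1 : ∑ s, p s = 1)
    -- (X2, X4) ⊥ X1 : p₁₂₄(i, j, l) = p₂₄(j, l) · p₁(i)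
    (hind : ∀ i j l, (∑ k, p (i, j, k, l))
        = (∑ i', ∑ k, p (i', j, k, l)) * pX1 p i) :
    -- X2 ⊥ X4 | (X1, X3)
    (∀ i j k l, p (i, j, k, l) * (∑ j', ∑ l', p (i, j', k, l'))
        = (∑ l', p (i, j, k, l')) * (∑ j', p (i, j', k, l)))
    ↔ (∀ i : Fin 2,
        q23c p i * q34c p i = q3c p i * q234c p i ∧
        q3c p i * q24 p - q23c p i * q4 p - q34c p i * q2 p + q234c p i
          = q24 p - q2 p * q4 p) := by
  simp only [q2_eq_rowSum, q4_eq_colSum, q24_eq_jointTable, q3c_eq_tableSum, q23c_eq_rowSum,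
    q34c_eq_colSum, q234c_eq_condTable]
  exact binary_prop14_general p (fun i => (pX1_pos hp0 i).ne') hind

end
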